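/- Let 0<p<1 and let (x_n)_{n∈ℕ} together with (x_n*)_{n∈ℕ} be a quasi-greedy basis of ℓ_p. Then the coefficient transform maps ℓ_p boundedly into ℓ_1: there is a constant C such that Σ_n |x_n*(f)| ≤ C‖f‖_p for every f ∈ ℓ_p. -/

import Mathlib

open scoped BigOperators

open scoped BigOperators

/-- For `0 < p < 1`, membership in `ℓ_p`: the sequence `(|f j|^p)_j` is summable. -/
def MemLpSeq (p : ℝ) (f : ℕ → ℝ) : Prop := Summable fun j => |f j| ^ p

/-- The `p`-norm `‖f‖_p = (∑_j |f j|^p)^(1/p)`. -/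
noncomputable def pNorm (p : ℝ) (f : ℕ → ℝ) : ℝ := (∑' j, |f j| ^ p) ^ (1 / p)

/-- `A` is a greedy set for the coefficient sequence `coef`. -/
def GreedySet (coef : ℕ → ℝ) (A : Finset ℕ) : Prop :=
  ∀ n ∈ A, ∀ k ∉ A, |coef k| ≤ |coef n|

/-- `(x_n)` together with bounded linear functionals `(x_n^*)` is a basis of `ℓ_p`. -/
structure IsLpBasis (p : ℝ) (x : ℕ → ℕ → ℝ) (xs : ℕ → (ℕ → ℝ) → ℝ) : Prop where
  mem : ∀ n, MemLpSeq p (x n)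
  map_add : ∀ n f g, MemLpSeq p f → MemLpSeq p g → xs n (f + g) = xs n f + xs n g
  map_smul : ∀ n (c : ℝ) (f : ℕ → ℝ), MemLpSeq p f → xs n (fun j => c * f j) = c * xs n f
  bdd : ∃ b : ℝ, ∀ n f, MemLpSeq p f → |xs n f| ≤ b * pNorm p f
  biorth : ∀ m n, xs m (x n) = if m = n then (1 : ℝ) else 0
  dense : ∀ f, MemLpSeq p f → ∀ ε > 0, ∃ (A : Finset ℕ) (c : ℕ → ℝ),
    pNorm p (fun j => f j - ∑ n ∈ A, c n * x n j) < ε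
  norm_lb : ∃ c > 0, ∀ n, c ≤ pNorm p (x n)
  norm_ub : ∃ C : ℝ, ∀ n, pNorm p (x n) ≤ C

/-- The basis is quasi-greedy: greedy projections are uniformly bounded. -/
def QuasiGreedy (p : ℝ) (x : ℕ → ℕ → ℝ) (xs : ℕ → (ℕ → ℝ) → ℝ) : Prop :=
  ∃ C ≥ (1 : ℝ), ∀ f, MemLpSeq p f → ∀ A : Finset ℕ,
    GreedySet (fun n => xs n f) A →
    pNorm p (fun j => ∑ n ∈ A, xs n f * x n j) ≤ C * pNorm p f

/-!
Write `e j` for the unit vectors. It suffices to bound `∑ n, |xs n (e j)|` uniformly in `j`, since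
`f = ∑ j, f j • e j` and `ℓ_p ⊆ ℓ_1`.

Quasi-greediness implies a truncation property: if `|xs n (e i)| ≥ t` on a finite set `A`, then for
suitable signs `σ` and all `B ⊆ A` the `p`-th power of the norm of `∑ n ∈ B, σ n • x n` is at most
`M * t ^ (-p)`. On the other hand `#A = ∑ n ∈ A, xs n (x n) = ∑ j, ∑ n ∈ A, x n j * xs n (e j)`,
and in each coordinate `j` the inner sum is controlled by the average of
`|∑ n ∈ B, σ n * x n j| ^ p` over `B ⊆ A`. Khinchin's inequality makes this a uniform weak `ℓ_2`
bound for the sequences `n ↦ |xs n (e i)|`. A cruder estimate of the same average gives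
`#A ≤ C * t ^ (-p) * sup_j ∑ n ∈ A, |xs n (e j)|`, which improves a uniform weak `ℓ_q` bound,
`q > 1`, to a uniform weak `ℓ_{pq}` bound. Since `p < 1`, finitely many improvements lead below
`ℓ_1`, where weak `ℓ_q` embeds into `ℓ_1`.
-/

open Finset

section SubsetSums

variable {ι : Type*} {p : ℝ}

lemma abs_add_rpow_le (hp0 : 0 ≤ p) (hp1 : p ≤ 1) (a b : ℝ) :
    |a + b| ^ p ≤ |a| ^ p + |b| ^ p :=
  (Real.rpow_le_rpow (abs_nonneg _) (abs_add_le a b) hp0).trans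
    (Real.rpow_add_le_add_rpow (abs_nonneg _) (abs_nonneg _) hp0 hp1)

lemma rpow_one_sub_mul_rpow_self {u : ℝ} (hu : 0 ≤ u) : u ^ (1 - p) * u ^ p = u := by
  rw [← Real.rpow_add' hu (by simp), sub_add_cancel, Real.rpow_one]

lemma abs_le_rpow_mul_abs_rpow (hp1 : p ≤ 1) {u N : ℝ} (h : |u| ≤ N) :
    |u| ≤ N ^ (1 - p) * |u| ^ p :=
  calc |u| = |u| ^ (1 - p) * |u| ^ p := (rpow_one_sub_mul_rpow_self (abs_nonneg u)).symm
    _ ≤ N ^ (1 - p) * |u| ^ p := by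
        have := sub_nonneg.2 hp1
        gcongr

/-- The mean over subsets `B` of a finite set `A` dominates each term: pair `B` with
`B ∪ {n}`. -/
lemma two_pow_card_mul_abs_rpow_le (hp0 : 0 ≤ p) (hp1 : p ≤ 1) (c : ι → ℝ) {A : Finset ι}
    {n : ι} (hn : n ∈ A) :
    2 ^ #A * |c n| ^ p ≤ 2 * ∑ B ∈ A.powerset, |∑ m ∈ B, c m| ^ p := by
  classical
  obtain ⟨A', hnA', rfl⟩ : ∃ A', n ∉ A' ∧ insert n A' = A :=
    ⟨A.erase n, notMem_erase n A, insert_erase hn⟩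
  have hpair : ∀ B ∈ A'.powerset,
      |c n| ^ p ≤ |∑ m ∈ B, c m| ^ p + |∑ m ∈ insert n B, c m| ^ p := by
    intro B hB
    rw [sum_insert fun h => hnA' (mem_powerset.1 hB h)]
    simpa using abs_add_rpow_le hp0 hp1 (-∑ m ∈ B, c m) (c n + ∑ m ∈ B, c m)
  rw [sum_powerset_insert hnA', ← sum_add_distrib, card_insert_of_notMem hnA', pow_succ',
    mul_assoc]
  have hsum := card_nsmul_le_sum _ _ _ hpair
  rw [card_powerset, nsmul_eq_mul] at hsum
  push_cast at hsum
  gcongr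

lemma two_pow_card_mul_sum_mul_le_of_abs_le (hp0 : 0 ≤ p) (hp1 : p ≤ 1) {A : Finset ι}
    {c y : ι → ℝ} {N φ : ℝ} (hc : ∀ n ∈ A, |c n| ≤ N) (hy : ∑ n ∈ A, |y n| ≤ φ) (hN : 0 ≤ N) :
    2 ^ #A * ∑ n ∈ A, c n * y n ≤
      2 * N ^ (1 - p) * φ * ∑ B ∈ A.powerset, |∑ n ∈ B, c n| ^ p := by
  set G := ∑ B ∈ A.powerset, |∑ n ∈ B, c n| ^ p
  have : 0 ≤ G := sum_nonneg fun B _ => by positivity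
  have hterm : ∀ n ∈ A, 2 ^ #A * (c n * y n) ≤ 2 * N ^ (1 - p) * G * |y n| := by
    intro n hn
    calc 2 ^ #A * (c n * y n) ≤ 2 ^ #A * (|c n| * |y n|) := by
          rw [← abs_mul]
          gcongr
          exact le_abs_self _
      _ ≤ 2 ^ #A * (N ^ (1 - p) * |c n| ^ p * |y n|) := by
          gcongr
          exact abs_le_rpow_mul_abs_rpow hp1 (hc n hn)
      _ = N ^ (1 - p) * |y n| * (2 ^ #A * |c n| ^ p) := by ring
      _ ≤ N ^ (1 - p) * |y n| * (2 * G) :=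
          mul_le_mul_of_nonneg_left (two_pow_card_mul_abs_rpow_le hp0 hp1 c hn) (by positivity)
      _ = 2 * N ^ (1 - p) * G * |y n| := by ring
  calc 2 ^ #A * ∑ n ∈ A, c n * y n ≤ ∑ n ∈ A, 2 * N ^ (1 - p) * G * |y n| := by
        rw [mul_sum]
        exact sum_le_sum hterm
    _ = 2 * N ^ (1 - p) * G * ∑ n ∈ A, |y n| := (mul_sum _ _ _).symm
    _ ≤ 2 * N ^ (1 - p) * G * φ := by gcongr
    _ = 2 * N ^ (1 - p) * φ * G := by ring

/-- The Riesz product `∏_{n ∈ B} (1 + i yₙ) ∏_{n ∈ A \ B} (1 - i yₙ)`, a function of the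
subset `B` of `A`; correlating it with `B ↦ ∑_{n ∈ B} cₙ` extracts `∑_{n ∈ A} cₙ yₙ`. -/
noncomputable def rieszProduct [DecidableEq ι] (y : ι → ℝ) (A B : Finset ι) : ℂ :=
  (∏ n ∈ B, (1 + y n * Complex.I)) * ∏ n ∈ A \ B, (1 - y n * Complex.I)

lemma sum_rieszProduct [DecidableEq ι] (y : ι → ℝ) (A : Finset ι) :
    ∑ B ∈ A.powerset, rieszProduct y A B = 2 ^ #A := by
  simp_rw [rieszProduct, ← prod_add, add_add_sub_cancel, one_add_one_eq_two, prod_const]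

lemma two_mul_sum_sum_mul_rieszProduct [DecidableEq ι] (c y : ι → ℝ) (A : Finset ι) :
    2 * ∑ B ∈ A.powerset, (∑ n ∈ B, (c n : ℂ)) * rieszProduct y A B =
      2 ^ #A * ∑ n ∈ A, (c n : ℂ) * (1 + y n * Complex.I) := by
  induction A using Finset.induction_on with
  | empty => simp
  | insert a A ha ih =>
    have hout : ∀ B ∈ A.powerset, rieszProduct y (insert a A) B =
        (1 - y a * Complex.I) * rieszProduct y A B := by
      intro B hB
      have haB : a ∉ B := fun h => ha (mem_powerset.1 hB h)
      rw [rieszProduct, insert_sdiff_of_notMem _ haB,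
        prod_insert fun h => ha (mem_sdiff.1 h).1, rieszProduct]
      ring
    have hin : ∀ B ∈ A.powerset, rieszProduct y (insert a A) (insert a B) =
        (1 + y a * Complex.I) * rieszProduct y A B := by
      intro B hB
      have haB : a ∉ B := fun h => ha (mem_powerset.1 hB h)
      rw [rieszProduct, insert_sdiff_insert, sdiff_insert_of_notMem ha, prod_insert haB,
        rieszProduct]
      ring
    have hstep : ∀ B ∈ A.powerset,
        (∑ n ∈ B, (c n : ℂ)) * rieszProduct y (insert a A) B +
          (∑ n ∈ insert a B, (c n : ℂ)) * rieszProduct y (insert a A) (insert a B) =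
        2 * ((∑ n ∈ B, (c n : ℂ)) * rieszProduct y A B) +
          c a * (1 + y a * Complex.I) * rieszProduct y A B := by
      intro B hB
      rw [hout B hB, hin B hB, sum_insert fun h => ha (mem_powerset.1 hB h)]
      ring
    rw [sum_powerset_insert ha, ← sum_add_distrib, sum_congr rfl hstep, sum_add_distrib,
      ← mul_sum, ← mul_sum, sum_rieszProduct, ih, card_insert_of_notMem ha, sum_insert ha]
    ring

lemma norm_one_add_mul_I_le (u : ℝ) : ‖(1 + u * Complex.I : ℂ)‖ ≤ Real.exp (u ^ 2 / 2) := by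
  refine le_of_sq_le_sq ?_ (Real.exp_pos _).le
  calc ‖(1 + u * Complex.I : ℂ)‖ ^ 2 = u ^ 2 + 1 := by
        rw [Complex.sq_norm, Complex.normSq_apply]
        simp
        ring
    _ ≤ Real.exp (u ^ 2) := Real.add_one_le_exp _
    _ = Real.exp (u ^ 2 / 2) ^ 2 := by rw [← Real.exp_nat_mul]; congr 1; push_cast; ring

lemma norm_rieszProduct_le [DecidableEq ι] (y : ι → ℝ) {A B : Finset ι} (hBA : B ⊆ A) :
    ‖rieszProduct y A B‖ ≤ Real.exp ((∑ n ∈ A, y n ^ 2) / 2) := by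
  have hsub : ∀ u : ℝ, ‖(1 - u * Complex.I : ℂ)‖ ≤ Real.exp (u ^ 2 / 2) := fun u => by
    simpa [sub_eq_add_neg] using norm_one_add_mul_I_le (-u)
  calc ‖rieszProduct y A B‖
      = (∏ n ∈ B, ‖(1 + y n * Complex.I : ℂ)‖) * ∏ n ∈ A \ B, ‖(1 - y n * Complex.I : ℂ)‖ := by
        rw [rieszProduct, norm_mul, norm_prod, norm_prod]
    _ ≤ (∏ n ∈ B, Real.exp (y n ^ 2 / 2)) * ∏ n ∈ A \ B, Real.exp (y n ^ 2 / 2) := by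
        gcongr
        · exact norm_one_add_mul_I_le _
        · exact hsub _
    _ = Real.exp ((∑ n ∈ A, y n ^ 2) / 2) := by
        rw [mul_comm, prod_sdiff hBA, ← Real.exp_sum, sum_div]

lemma two_pow_card_mul_sum_mul_le_exp (c y : ι → ℝ) (A : Finset ι) :
    2 ^ #A * ∑ n ∈ A, c n * y n ≤
      2 * Real.exp ((∑ n ∈ A, y n ^ 2) / 2) * ∑ B ∈ A.powerset, |∑ n ∈ B, c n| := by
  classical
  have him : 2 ^ #A * ∑ n ∈ A, c n * y n =
      (2 * ∑ B ∈ A.powerset, (∑ n ∈ B, (c n : ℂ)) * rieszProduct y A B).im := by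
    have hcast : (2 : ℂ) ^ #A * ∑ n ∈ A, (c n : ℂ) * (1 + y n * Complex.I) =
        (2 ^ #A * ∑ n ∈ A, c n : ℝ) + (2 ^ #A * ∑ n ∈ A, c n * y n : ℝ) * Complex.I := by
      push_cast
      simp only [mul_add, mul_one, sum_add_distrib, ← mul_assoc, ← sum_mul]
    rw [two_mul_sum_sum_mul_rieszProduct, hcast, Complex.add_im, Complex.ofReal_im, zero_add,
      Complex.im_ofReal_mul, Complex.I_im, mul_one]
  rw [him, mul_assoc]
  refine (Complex.im_le_norm _).trans ?_
  rw [norm_mul, Complex.norm_two]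
  refine mul_le_mul_of_nonneg_left ?_ zero_le_two
  rw [mul_sum]
  refine norm_sum_le_of_le _ fun B hB => ?_
  rw [norm_mul, ← Complex.ofReal_sum, Complex.norm_real, Real.norm_eq_abs, mul_comm]
  gcongr
  exact norm_rieszProduct_le y (mem_powerset.1 hB)

/-- The `√#A` is Khinchin's inequality: the Riesz product of `yₙ / √#A` is bounded. -/
lemma two_pow_card_mul_sum_mul_le_sqrt (c : ι → ℝ) {y : ι → ℝ} {A : Finset ι} {b : ℝ}
    (hy : ∀ n ∈ A, |y n| ≤ b) :
    2 ^ #A * ∑ n ∈ A, c n * y n ≤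
      2 * Real.exp (b ^ 2 / 2) * √(#A : ℝ) * ∑ B ∈ A.powerset, |∑ n ∈ B, c n| := by
  rcases A.eq_empty_or_nonempty with rfl | hA
  · simp
  have hcard : (0 : ℝ) < #A := by exact_mod_cast hA.card_pos
  set s := √(#A : ℝ)
  have hs : 0 < s := Real.sqrt_pos.2 hcard
  have hsq : ∑ n ∈ A, (y n / s) ^ 2 ≤ b ^ 2 := by
    calc ∑ n ∈ A, (y n / s) ^ 2 ≤ ∑ n ∈ A, b ^ 2 / #A := by
          refine sum_le_sum fun n hn => ?_
          rw [div_pow, Real.sq_sqrt hcard.le]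
          refine div_le_div_of_nonneg_right ?_ hcard.le
          exact sq_le_sq.2 ((hy n hn).trans (le_abs_self b))
      _ = b ^ 2 := by
          rw [sum_const, nsmul_eq_mul]
          field_simp
  calc 2 ^ #A * ∑ n ∈ A, c n * y n = s * (2 ^ #A * ∑ n ∈ A, c n * (y n / s)) := by
        simp_rw [← mul_div_assoc, ← sum_div]
        field_simp
    _ ≤ s * (2 * Real.exp ((∑ n ∈ A, (y n / s) ^ 2) / 2) *
          ∑ B ∈ A.powerset, |∑ n ∈ B, c n|) :=
        mul_le_mul_of_nonneg_left (two_pow_card_mul_sum_mul_le_exp ..) hs.le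
    _ ≤ s * (2 * Real.exp (b ^ 2 / 2) * ∑ B ∈ A.powerset, |∑ n ∈ B, c n|) := by gcongr
    _ = 2 * Real.exp (b ^ 2 / 2) * s * ∑ B ∈ A.powerset, |∑ n ∈ B, c n| := by ring

end SubsetSums

section WeakLp

variable {ι κ : Type*} {q : ℝ}

/-- The sequences `a i` are bounded in weak `ℓ_q` uniformly in `i`: at most `D t^(-q)` entries
of each are at least `t`. -/
def UniformWeakLp (q : ℝ) (a : κ → ι → ℝ) : Prop :=
  ∃ D ≥ (0 : ℝ), ∀ i, ∀ t > 0, ∀ B : Finset ι, (∀ n ∈ B, t ≤ a i n) → (#B : ℝ) ≤ D * t ^ (-q)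

lemma UniformWeakLp.mono {a : κ → ι → ℝ} {q' b : ℝ} (h : UniformWeakLp q a)
    (hb : ∀ i n, a i n ≤ b) (hqq' : q ≤ q') : UniformWeakLp q' a := by
  obtain ⟨D, hD0, hD⟩ := h
  refine ⟨D * |b| ^ (q' - q), by positivity, fun i t ht B hB => ?_⟩
  rcases B.eq_empty_or_nonempty with rfl | ⟨n, hn⟩
  · simp only [card_empty, Nat.cast_zero]
    positivity
  have htb : t ≤ |b| := ((hB n hn).trans (hb i n)).trans (le_abs_self b)
  calc (#B : ℝ) ≤ D * t ^ (-q) := hD i t ht B hB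
    _ = D * (t ^ (q' - q) * t ^ (-q')) := by rw [← Real.rpow_add ht]; ring_nf
    _ ≤ D * (|b| ^ (q' - q) * t ^ (-q')) := by
        have := sub_nonneg.2 hqq'
        gcongr
    _ = D * |b| ^ (q' - q) * t ^ (-q') := by ring

/-- The bound is the one given by the decreasing rearrangement: the `k`-th largest entry is at
most `(D / k)^(1/q)`. -/
lemma sum_le_rpow_mul_sum_range (hq : 0 < q) {a : ι → ℝ} {D : ℝ} (hD0 : 0 ≤ D)
    (hD : ∀ t > 0, ∀ B : Finset ι, (∀ n ∈ B, t ≤ a n) → (#B : ℝ) ≤ D * t ^ (-q))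
    (B : Finset ι) :
    ∑ n ∈ B, a n ≤ D ^ q⁻¹ * ∑ k ∈ range #B, ((k : ℝ) + 1) ^ (-q⁻¹) := by
  classical
  induction B using Finset.induction_on_min_value a with
  | empty => simp
  | insert m B hm hmin ih =>
    have hle : a m ≤ D ^ q⁻¹ * ((#B : ℝ) + 1) ^ (-q⁻¹) := by
      rcases le_or_gt (a m) 0 with hneg | hpos
      · exact hneg.trans (by positivity)
      have hcard := hD (a m) hpos (insert m B) (forall_mem_insert .. |>.2 ⟨le_rfl, hmin⟩)
      rw [card_insert_of_notMem hm, Nat.cast_succ, Real.rpow_neg hpos.le, ← div_eq_mul_inv,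
        le_div_iff₀ (by positivity), ← le_div_iff₀' (by positivity)] at hcard
      calc a m = (a m ^ q) ^ q⁻¹ := (Real.rpow_rpow_inv hpos.le hq.ne').symm
        _ ≤ (D / ((#B : ℝ) + 1)) ^ q⁻¹ := by gcongr
        _ = D ^ q⁻¹ * ((#B : ℝ) + 1) ^ (-q⁻¹) := by
            rw [Real.div_rpow hD0 (by positivity), Real.rpow_neg (by positivity), div_eq_mul_inv]
    rw [sum_insert hm, card_insert_of_notMem hm, sum_range_succ, mul_add]
    linarith

lemma UniformWeakLp.exists_sum_le {a : κ → ι → ℝ} (h : UniformWeakLp q a) (hq0 : 0 < q)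
    (hq1 : q < 1) : ∃ C, ∀ i (B : Finset ι), ∑ n ∈ B, a i n ≤ C := by
  obtain ⟨D, hD0, hD⟩ := h
  have hs : Summable fun k : ℕ => ((k : ℝ) + 1) ^ (-q⁻¹) := by
    have := (summable_nat_add_iff 1).2
      (Real.summable_nat_rpow.2 (neg_lt_neg ((one_lt_inv₀ hq0).2 hq1)))
    exact_mod_cast this
  refine ⟨D ^ q⁻¹ * ∑' k : ℕ, ((k : ℝ) + 1) ^ (-q⁻¹), fun i B => ?_⟩
  refine (sum_le_rpow_mul_sum_range hq0 hD0 (hD i) B).trans ?_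
  gcongr
  exact hs.sum_le_tsum _ fun k _ => by positivity

lemma sum_range_rpow_neg_le {s : ℝ} (hs0 : 0 ≤ s) (hs1 : s < 1) (m : ℕ) :
    ∑ k ∈ range m, ((k : ℝ) + 1) ^ (-s) ≤ (m : ℝ) ^ (1 - s) / (1 - s) := by
  have h1s : 0 < 1 - s := sub_pos.2 hs1
  induction m with
  | zero => simpa using div_nonneg (by positivity) h1s.le
  | succ k ih =>
    have hk : (0 : ℝ) < k + 1 := by positivity
    have hbernoulli : (k : ℝ) ^ (1 - s) ≤
        ((k : ℝ) + 1) ^ (1 - s) - (1 - s) * ((k : ℝ) + 1) ^ (-s) :=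
      calc (k : ℝ) ^ (1 - s) = ((k : ℝ) + 1) ^ (1 - s) * (1 + -((k : ℝ) + 1)⁻¹) ^ (1 - s) := by
            rw [← Real.mul_rpow hk.le (by field_simp; simp)]
            congr 1
            field_simp
            ring
        _ ≤ ((k : ℝ) + 1) ^ (1 - s) * (1 + (1 - s) * -((k : ℝ) + 1)⁻¹) := by
            gcongr
            refine rpow_one_add_le_one_add_mul_self ?_ h1s.le (by linarith)
            exact neg_le_neg (inv_le_one_of_one_le₀ (by linarith [Nat.cast_nonneg (α := ℝ) k]))
        _ = ((k : ℝ) + 1) ^ (1 - s) - (1 - s) * ((k : ℝ) + 1) ^ (-s) := by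
            rw [sub_eq_add_neg 1 s, Real.rpow_add hk, Real.rpow_one]
            field_simp
            ring
    rw [sum_range_succ, Nat.cast_succ]
    rw [le_div_iff₀ h1s] at ih ⊢
    linarith

lemma UniformWeakLp.exists_sum_le_rpow {a : κ → ι → ℝ} (h : UniformWeakLp q a) (hq : 1 < q) :
    ∃ C ≥ (0 : ℝ), ∀ i (B : Finset ι), ∑ n ∈ B, a i n ≤ C * (#B : ℝ) ^ (1 - q⁻¹) := by
  obtain ⟨D, hD0, hD⟩ := h
  have hq0 : 0 < q := one_pos.trans hq
  have hq1 : q⁻¹ < 1 := inv_lt_one_of_one_lt₀ hq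
  refine ⟨D ^ q⁻¹ / (1 - q⁻¹), div_nonneg (by positivity) (sub_nonneg.2 hq1.le),
    fun i B => ?_⟩
  calc ∑ n ∈ B, a i n ≤ D ^ q⁻¹ * ∑ k ∈ range #B, ((k : ℝ) + 1) ^ (-q⁻¹) :=
        sum_le_rpow_mul_sum_range hq0 hD0 (hD i) B
    _ ≤ D ^ q⁻¹ * ((#B : ℝ) ^ (1 - q⁻¹) / (1 - q⁻¹)) := by
        gcongr
        exact sum_range_rpow_neg_le (by positivity) hq1 _
    _ = D ^ q⁻¹ / (1 - q⁻¹) * (#B : ℝ) ^ (1 - q⁻¹) := by ring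

lemma UniformWeakLp.of_forall_mul {a : κ → ι → ℝ} {p b : ℝ} (hp0 : 0 < p) (hp1 : p < 1)
    (h : UniformWeakLp q a) (hb : ∀ i n, a i n ≤ b)
    (hmul : ∀ r > 1, UniformWeakLp r a → UniformWeakLp (p * r) a) :
    UniformWeakLp √p a := by
  have hdescend : ∀ k : ℕ, UniformWeakLp (√p / p ^ k) a → UniformWeakLp √p a := by
    intro k
    induction k with
    | zero => simp
    | succ k ih =>
      intro hk
      refine ih ?_
      have hr : 1 < √p / p ^ (k + 1) := by
        rw [one_lt_div (by positivity)]
        exact (pow_le_of_le_one hp0.le hp1.le k.succ_ne_zero).trans_lt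
          (Real.lt_sqrt_of_sq_lt (by nlinarith))
      have heq : p * (√p / p ^ (k + 1)) = √p / p ^ k := by
        field_simp
        exact (pow_succ' p k).symm
      exact heq ▸ hmul _ hr hk
  obtain ⟨k, hk⟩ : ∃ k : ℕ, p ^ k * |q| < √p := by
    have hlim := (tendsto_pow_atTop_nhds_zero_of_lt_one hp0.le hp1).mul_const |q|
    rw [zero_mul] at hlim
    exact (hlim.eventually_lt_const (Real.sqrt_pos.2 hp0)).exists
  refine hdescend k (h.mono hb ?_)
  rw [le_div_iff₀' (by positivity)]
  exact (mul_le_mul_of_nonneg_left (le_abs_self q) (by positivity)).trans hk.le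

end WeakLp

section Modular

variable {ι : Type*} {p : ℝ} {f g : ℕ → ℝ}

/-- The modular `∑ j, |f j| ^ p` of `ℓ_p`, that is, the `p`-th power of `pNorm p f`. For `p ≤ 1`
it is subadditive on `ℓ_p`; outside `ℓ_p` it is the junk value `0`. -/
noncomputable def pModular (p : ℝ) (f : ℕ → ℝ) : ℝ := ∑' j, |f j| ^ p

lemma pModular_nonneg (p : ℝ) (f : ℕ → ℝ) : 0 ≤ pModular p f :=
  tsum_nonneg fun _ => by positivity

lemma pNorm_eq_pModular_rpow (p : ℝ) (f : ℕ → ℝ) : pNorm p f = pModular p f ^ p⁻¹ := by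
  rw [pNorm, one_div, pModular]

lemma pNorm_nonneg (p : ℝ) (f : ℕ → ℝ) : 0 ≤ pNorm p f :=
  Real.rpow_nonneg (pModular_nonneg p f) _

lemma pNorm_rpow (hp : 0 < p) (f : ℕ → ℝ) : pNorm p f ^ p = pModular p f := by
  rw [pNorm_eq_pModular_rpow, Real.rpow_inv_rpow (pModular_nonneg p f) hp.ne']

lemma MemLpSeq.hasSum (hf : MemLpSeq p f) : HasSum (fun j => |f j| ^ p) (pModular p f) :=
  Summable.hasSum hf

lemma MemLpSeq.zero (hp : 0 < p) : MemLpSeq p 0 := by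
  simp [MemLpSeq, Real.zero_rpow hp.ne', summable_zero]

lemma MemLpSeq.add (hp0 : 0 ≤ p) (hp1 : p ≤ 1) (hf : MemLpSeq p f) (hg : MemLpSeq p g) :
    MemLpSeq p (f + g) :=
  (Summable.add hf hg).of_nonneg_of_le (fun _ => by positivity)
    fun _ => abs_add_rpow_le hp0 hp1 _ _

lemma MemLpSeq.smul (c : ℝ) (hf : MemLpSeq p f) : MemLpSeq p (c • f) := by
  simpa only [MemLpSeq, Pi.smul_apply, smul_eq_mul, abs_mul,
    Real.mul_rpow (abs_nonneg _) (abs_nonneg _)] using Summable.mul_left (|c| ^ p) hf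

lemma MemLpSeq.sub (hp0 : 0 ≤ p) (hp1 : p ≤ 1) (hf : MemLpSeq p f) (hg : MemLpSeq p g) :
    MemLpSeq p (f - g) := by
  rw [sub_eq_add_neg, ← neg_one_smul ℝ g]
  exact hf.add hp0 hp1 (hg.smul _)

lemma MemLpSeq.sum (hp0 : 0 < p) (hp1 : p ≤ 1) {A : Finset ι} {y : ι → ℕ → ℝ}
    (hy : ∀ n ∈ A, MemLpSeq p (y n)) : MemLpSeq p (∑ n ∈ A, y n) :=
  sum_induction _ _ (fun _ _ => .add hp0.le hp1) (.zero hp0) hy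

lemma MemLpSeq.sum_smul (hp0 : 0 < p) (hp1 : p ≤ 1) {A : Finset ι} {y : ι → ℕ → ℝ}
    (hy : ∀ n ∈ A, MemLpSeq p (y n)) (c : ι → ℝ) : MemLpSeq p (∑ n ∈ A, c n • y n) :=
  .sum hp0 hp1 fun n hn => (hy n hn).smul (c n)

lemma pModular_zero (hp : 0 < p) : pModular p 0 = 0 := by
  simp [pModular, Real.zero_rpow hp.ne']

lemma pModular_add_le (hp0 : 0 ≤ p) (hp1 : p ≤ 1) (hf : MemLpSeq p f) (hg : MemLpSeq p g) :
    pModular p (f + g) ≤ pModular p f + pModular p g := by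
  rw [pModular, pModular, pModular, ← Summable.tsum_add hf hg]
  exact (hf.add hp0 hp1 hg).tsum_le_tsum (fun _ => abs_add_rpow_le hp0 hp1 _ _)
    (Summable.add hf hg)

lemma pModular_smul (c : ℝ) (f : ℕ → ℝ) : pModular p (c • f) = |c| ^ p * pModular p f := by
  simp only [pModular, Pi.smul_apply, smul_eq_mul, abs_mul,
    Real.mul_rpow (abs_nonneg _) (abs_nonneg _), tsum_mul_left]

lemma pModular_sub_le (hp0 : 0 ≤ p) (hp1 : p ≤ 1) (hf : MemLpSeq p f) (hg : MemLpSeq p g) :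
    pModular p (f - g) ≤ pModular p f + pModular p g := by
  have hneg : pModular p ((-1 : ℝ) • g) = pModular p g := by
    rw [pModular_smul, abs_neg, abs_one, Real.one_rpow, one_mul]
  rw [sub_eq_add_neg, ← neg_one_smul ℝ g, ← hneg]
  exact pModular_add_le hp0 hp1 hf (hg.smul _)

lemma pModular_sum_le (hp0 : 0 < p) (hp1 : p ≤ 1) {A : Finset ι} {y : ι → ℕ → ℝ}
    (hy : ∀ n ∈ A, MemLpSeq p (y n)) :
    pModular p (∑ n ∈ A, y n) ≤ ∑ n ∈ A, pModular p (y n) :=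
  le_sum_of_subadditive_on_pred (pModular p) (MemLpSeq p) (pModular_zero hp0).le
    (fun _ _ => pModular_add_le hp0.le hp1) (fun _ _ => .add hp0.le hp1) y hy

lemma MemLpSeq.abs_rpow_le_pModular (hf : MemLpSeq p f) (j : ℕ) : |f j| ^ p ≤ pModular p f :=
  hf.le_tsum j fun _ _ => by positivity

lemma MemLpSeq.abs_le_pNorm (hp : 0 < p) (hf : MemLpSeq p f) (j : ℕ) : |f j| ≤ pNorm p f := by
  rw [pNorm_eq_pModular_rpow,
    Real.le_rpow_inv_iff_of_pos (abs_nonneg _) (pModular_nonneg p f) hp]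
  exact hf.abs_rpow_le_pModular j

lemma MemLpSeq.abs_le_mul_abs_rpow (hp0 : 0 < p) (hp1 : p ≤ 1) (hf : MemLpSeq p f) (j : ℕ) :
    |f j| ≤ pNorm p f ^ (1 - p) * |f j| ^ p :=
  abs_le_rpow_mul_abs_rpow hp1 (hf.abs_le_pNorm hp0 j)

lemma MemLpSeq.summable_abs (hp0 : 0 < p) (hp1 : p ≤ 1) (hf : MemLpSeq p f) :
    Summable fun j => |f j| :=
  (Summable.mul_left _ hf).of_nonneg_of_le (fun _ => abs_nonneg _)
    (hf.abs_le_mul_abs_rpow hp0 hp1)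

lemma MemLpSeq.tsum_abs_le_pNorm (hp0 : 0 < p) (hp1 : p ≤ 1) (hf : MemLpSeq p f) :
    ∑' j, |f j| ≤ pNorm p f :=
  calc ∑' j, |f j| ≤ ∑' j, pNorm p f ^ (1 - p) * |f j| ^ p :=
        (hf.summable_abs hp0 hp1).tsum_le_tsum (hf.abs_le_mul_abs_rpow hp0 hp1)
          (Summable.mul_left _ hf)
    _ = pNorm p f ^ (1 - p) * pNorm p f ^ p := by rw [tsum_mul_left, pNorm_rpow hp0, pModular]
    _ = pNorm p f := rpow_one_sub_mul_rpow_self (pNorm_nonneg p f)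

lemma hasSum_abs_single_rpow (hp : 0 < p) (i : ℕ) :
    HasSum (fun j => |(Pi.single i 1 : ℕ → ℝ) j| ^ p) 1 := by
  convert hasSum_ite_eq i (1 : ℝ) using 2 with j
  simp only [Pi.single_apply]
  split_ifs <;> simp [Real.zero_rpow hp.ne']

lemma memLpSeq_single (hp : 0 < p) (i : ℕ) : MemLpSeq p (Pi.single i 1) :=
  (hasSum_abs_single_rpow hp i).summable

lemma pModular_single (hp : 0 < p) (i : ℕ) : pModular p (Pi.single i 1) = 1 :=
  (hasSum_abs_single_rpow hp i).tsum_eq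

/-- Peel off the first binary digit of the weights: `β = (𝟙_B + β') / 2` with
`B = {n | 1 / 2 ≤ β n}`. -/
lemma exists_pModular_sum_smul_le_half (hp0 : 0 < p) (hp1 : p ≤ 1) {A : Finset ι}
    {y : ι → ℕ → ℝ} (hy : ∀ n ∈ A, MemLpSeq p (y n)) {Q : ℝ}
    (hQ : ∀ B ⊆ A, pModular p (∑ n ∈ B, y n) ≤ Q) {β : ι → ℝ}
    (hβ : ∀ n ∈ A, β n ∈ Set.Icc 0 1) :
    ∃ β' : ι → ℝ, (∀ n ∈ A, β' n ∈ Set.Icc 0 1) ∧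
      2 ^ p * pModular p (∑ n ∈ A, β n • y n) ≤ Q + pModular p (∑ n ∈ A, β' n • y n) := by
  set B := {n ∈ A | 1 / 2 ≤ β n}
  set β' : ι → ℝ := fun n => 2 * β n - if 1 / 2 ≤ β n then 1 else 0
  have hβ' : ∀ n ∈ A, β' n ∈ Set.Icc 0 1 := by
    intro n hn
    obtain ⟨h0, h1⟩ := hβ n hn
    simp only [β', Set.mem_Icc]
    split_ifs <;> constructor <;> linarith
  have hsplit : (2 : ℝ) • ∑ n ∈ A, β n • y n = ∑ n ∈ B, y n + ∑ n ∈ A, β' n • y n := by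
    rw [sum_filter, ← sum_add_distrib, smul_sum]
    refine sum_congr rfl fun n _ => ?_
    simp only [β']
    split_ifs <;> module
  refine ⟨β', hβ', ?_⟩
  calc 2 ^ p * pModular p (∑ n ∈ A, β n • y n)
      = pModular p (∑ n ∈ B, y n + ∑ n ∈ A, β' n • y n) := by
        rw [← hsplit, pModular_smul, abs_two]
    _ ≤ pModular p (∑ n ∈ B, y n) + pModular p (∑ n ∈ A, β' n • y n) :=
        pModular_add_le hp0.le hp1 (.sum hp0 hp1 fun n hn => hy n (mem_of_mem_filter n hn))
          (.sum_smul hp0 hp1 hy β')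
    _ ≤ Q + pModular p (∑ n ∈ A, β' n • y n) := by
        gcongr
        exact hQ B (filter_subset _ _)

lemma pModular_sum_smul_le_of_forall_subset (hp0 : 0 < p) (hp1 : p ≤ 1) {A : Finset ι}
    {y : ι → ℕ → ℝ} (hy : ∀ n ∈ A, MemLpSeq p (y n)) {Q : ℝ}
    (hQ : ∀ B ⊆ A, pModular p (∑ n ∈ B, y n) ≤ Q) {β : ι → ℝ}
    (hβ : ∀ n ∈ A, β n ∈ Set.Icc 0 1) :
    pModular p (∑ n ∈ A, β n • y n) ≤ Q / (2 ^ p - 1) := by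
  have h2p : 1 < (2 : ℝ) ^ p := Real.one_lt_rpow one_lt_two hp0
  set V := (fun β : ι → ℝ => pModular p (∑ n ∈ A, β n • y n)) ''
    {β | ∀ n ∈ A, β n ∈ Set.Icc 0 1}
  have hV : BddAbove V := by
    refine ⟨∑ n ∈ A, pModular p (y n), ?_⟩
    rintro _ ⟨β, hβ, rfl⟩
    refine (pModular_sum_le hp0 hp1 fun n hn => (hy n hn).smul _).trans
      (sum_le_sum fun n hn => ?_)
    rw [pModular_smul, abs_of_nonneg (hβ n hn).1]
    exact mul_le_of_le_one_left (pModular_nonneg p _)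
      (Real.rpow_le_one (hβ n hn).1 (hβ n hn).2 hp0.le)
  have hself : sSup V ≤ (Q + sSup V) / 2 ^ p := by
    refine csSup_le ⟨_, β, hβ, rfl⟩ ?_
    rintro _ ⟨β, hβ, rfl⟩
    obtain ⟨β', hβ', hle⟩ := exists_pModular_sum_smul_le_half hp0 hp1 hy hQ hβ
    rw [le_div_iff₀' (by positivity)]
    exact hle.trans (add_le_add_right (le_csSup hV ⟨β', hβ', rfl⟩) Q)
  refine (le_csSup hV ⟨β, hβ, rfl⟩).trans ?_
  rw [le_div_iff₀ (by positivity)] at hself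
  rw [le_div_iff₀ (sub_pos.2 h2p)]
  linarith

lemma pModular_sum_le_two_mul_of_weights (hp0 : 0 < p) (hp1 : p ≤ 1) {A : Finset ι}
    {y : ι → ℕ → ℝ} (hy : ∀ n ∈ A, MemLpSeq p (y n)) {K δ : ℝ} (hδ0 : 0 < δ)
    (hδ : δ ^ p * (K / (2 ^ p - 1)) ≤ 1 / 2)
    (hK : ∀ B ⊆ A, pModular p (∑ n ∈ B, y n) ≤ K * pModular p (∑ n ∈ A, y n)) {w : ι → ℝ}
    (hw : ∀ n ∈ A, w n ∈ Set.Icc 1 (1 + δ)) :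
    pModular p (∑ n ∈ A, y n) ≤ 2 * pModular p (∑ n ∈ A, w n • y n) := by
  set R := pModular p (∑ n ∈ A, y n)
  set β : ι → ℝ := fun n => (w n - 1) / δ
  have hβ : ∀ n ∈ A, β n ∈ Set.Icc 0 1 := fun n hn =>
    ⟨div_nonneg (by linarith [(hw n hn).1]) hδ0.le,
      (div_le_one hδ0).2 (by linarith [(hw n hn).2])⟩
  have hsplit : ∑ n ∈ A, y n = ∑ n ∈ A, w n • y n - δ • ∑ n ∈ A, β n • y n := by
    rw [smul_sum, ← sum_sub_distrib]
    refine sum_congr rfl fun n _ => ?_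
    rw [smul_smul, mul_div_cancel₀ _ hδ0.ne']
    module
  have herr : pModular p (δ • ∑ n ∈ A, β n • y n) ≤ R / 2 :=
    calc pModular p (δ • ∑ n ∈ A, β n • y n) = δ ^ p * pModular p (∑ n ∈ A, β n • y n) := by
          rw [pModular_smul, abs_of_pos hδ0]
      _ ≤ δ ^ p * (K * R / (2 ^ p - 1)) := by
          gcongr
          exact pModular_sum_smul_le_of_forall_subset hp0 hp1 hy hK hβ
      _ = δ ^ p * (K / (2 ^ p - 1)) * R := by ring
      _ ≤ 1 / 2 * R := mul_le_mul_of_nonneg_right hδ (pModular_nonneg p _)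
      _ = R / 2 := by ring
  have htri : R ≤ pModular p (∑ n ∈ A, w n • y n) + pModular p (δ • ∑ n ∈ A, β n • y n) := by
    rw [show R = pModular p (∑ n ∈ A, w n • y n - δ • ∑ n ∈ A, β n • y n) by rw [← hsplit]]
    exact pModular_sub_le hp0.le hp1 (.sum_smul hp0 hp1 hy w)
      ((MemLpSeq.sum_smul hp0 hp1 hy β).smul δ)
  linarith

end Modular

section Basis

variable {p : ℝ} {x : ℕ → ℕ → ℝ} {xs : ℕ → (ℕ → ℝ) → ℝ} {f g : ℕ → ℝ}

lemma IsLpBasis.coef_smul (h : IsLpBasis p x xs) (n : ℕ) (c : ℝ) (hf : MemLpSeq p f) :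
    xs n (c • f) = c * xs n f :=
  h.map_smul n c f hf

lemma IsLpBasis.coef_sub (h : IsLpBasis p x xs) (n : ℕ) (hf : MemLpSeq p f)
    (hg : MemLpSeq p g) : xs n (f - g) = xs n f - xs n g := by
  rw [sub_eq_add_neg, ← neg_one_smul ℝ g, h.map_add n _ _ hf (hg.smul _), h.coef_smul n _ hg]
  ring

lemma IsLpBasis.coef_sum_smul (h : IsLpBasis p x xs) (hp0 : 0 < p) (hp1 : p ≤ 1) {ι : Type*}
    {A : Finset ι} {y : ι → ℕ → ℝ} (hy : ∀ i ∈ A, MemLpSeq p (y i)) (c : ι → ℝ) (n : ℕ) :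
    xs n (∑ i ∈ A, c i • y i) = ∑ i ∈ A, c i * xs n (y i) := by
  induction A using Finset.cons_induction with
  | empty => simpa using h.coef_smul n 0 (.zero hp0)
  | cons a A ha ih =>
    obtain ⟨hya, hyA⟩ := (forall_mem_cons ha _).1 hy
    rw [sum_cons, sum_cons, h.map_add n _ _ (hya.smul _) (.sum_smul hp0 hp1 hyA c),
      h.coef_smul n _ hya, ih hyA]

lemma IsLpBasis.coef_sum_smul_basis (h : IsLpBasis p x xs) (hp0 : 0 < p) (hp1 : p ≤ 1)
    (A : Finset ℕ) (c : ℕ → ℝ) (n : ℕ) :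
    xs n (∑ m ∈ A, c m • x m) = if n ∈ A then c n else 0 := by
  simp [h.coef_sum_smul hp0 hp1 (fun m _ => h.mem m), h.biorth]

lemma IsLpBasis.exists_pos_bound (h : IsLpBasis p x xs) :
    ∃ b > 0, ∀ n f, MemLpSeq p f → |xs n f| ≤ b * pNorm p f := by
  obtain ⟨b, hb⟩ := h.bdd
  refine ⟨max b 1, by positivity, fun n f hf => (hb n f hf).trans ?_⟩
  exact mul_le_mul_of_nonneg_right (le_max_left b 1) (pNorm_nonneg p f)

lemma IsLpBasis.exists_abs_coef_single_le (h : IsLpBasis p x xs) (hp : 0 < p) :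
    ∃ b, ∀ i n, |xs n (Pi.single i 1)| ≤ b := by
  obtain ⟨b, hb⟩ := h.bdd
  refine ⟨b, fun i n => ?_⟩
  simpa [pNorm_eq_pModular_rpow, pModular_single hp] using hb n _ (memLpSeq_single hp i)

lemma IsLpBasis.finite_setOf_le_abs_coef (h : IsLpBasis p x xs) (hp0 : 0 < p) (hp1 : p ≤ 1)
    (hf : MemLpSeq p f) {t : ℝ} (ht : 0 < t) : {n | t ≤ |xs n f|}.Finite := by
  obtain ⟨b, hb0, hb⟩ := h.exists_pos_bound
  obtain ⟨A, c, hAc⟩ := h.dense f hf (t / b) (by positivity)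
  set s := ∑ m ∈ A, c m • x m with hs
  have hs_mem : MemLpSeq p s := .sum_smul hp0 hp1 (fun m _ => h.mem m) c
  have hg : pNorm p (f - s) < t / b := by
    convert hAc using 2
    ext j
    simp [hs, Finset.sum_apply]
  refine A.finite_toSet.subset fun n (hn : t ≤ |xs n f|) => by_contra fun hnA => ?_
  have hcoef : xs n (f - s) = xs n f := by
    rw [h.coef_sub n hf hs_mem, h.coef_sum_smul_basis hp0 hp1, if_neg (mem_coe.not.1 hnA),
      sub_zero]
  refine hn.not_gt ?_
  calc |xs n f| ≤ b * pNorm p (f - s) := by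
        rw [← hcoef]
        exact hb n _ (hf.sub hp0.le hp1 hs_mem)
    _ < t := (lt_div_iff₀' hb0).1 hg

lemma IsLpBasis.hasSum_coef (h : IsLpBasis p x xs) (hp0 : 0 < p) (hp1 : p ≤ 1)
    (hf : MemLpSeq p f) (n : ℕ) :
    HasSum (fun i => f i * xs n (Pi.single i 1)) (xs n f) := by
  obtain ⟨b, hb⟩ := h.bdd
  have htail : ∀ F : Finset ℕ,
      ‖∑ i ∈ F, f i * xs n (Pi.single i 1) - xs n f‖ ≤
        b * (∑' j : {j // j ∉ F}, |f j| ^ p) ^ p⁻¹ := by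
    intro F
    set s := ∑ i ∈ F, f i • (Pi.single i 1 : ℕ → ℝ) with hs
    have hs_mem : MemLpSeq p s := .sum_smul hp0 hp1 (fun i _ => memLpSeq_single hp0 i) f
    have hg : pModular p (s - f) = ∑' j : {j // j ∉ F}, |f j| ^ p := by
      refine (tsum_congr fun j => ?_).trans (tsum_subtype {j | j ∉ F} fun j => |f j| ^ p).symm
      by_cases hj : j ∈ F <;>
        simp [hs, Finset.sum_apply, Pi.single_apply, hj, Real.zero_rpow hp0.ne']
    have hcoef : ∑ i ∈ F, f i * xs n (Pi.single i 1) - xs n f = xs n (s - f) := by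
      rw [h.coef_sub n hs_mem hf, h.coef_sum_smul hp0 hp1 fun i _ => memLpSeq_single hp0 i]
    rw [hcoef, Real.norm_eq_abs, ← hg, ← pNorm_eq_pModular_rpow]
    exact hb n _ (hs_mem.sub hp0.le hp1 hf)
  have hlim : Filter.Tendsto (fun F : Finset ℕ => b * (∑' j : {j // j ∉ F}, |f j| ^ p) ^ p⁻¹)
      Filter.atTop (nhds 0) := by
    have := ((tendsto_tsum_compl_atTop_zero fun j => |f j| ^ p).rpow_const
      (.inr (inv_nonneg.2 hp0.le))).const_mul b
    rwa [Real.zero_rpow (inv_ne_zero hp0.ne'), mul_zero] at this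
  rw [HasSum, SummationFilter.unconditional_filter, tendsto_iff_norm_sub_tendsto_zero]
  exact squeeze_zero (fun _ => norm_nonneg _) htail hlim

/-- The quasi-greedy condition for the modular, with constant `K`. -/
def ModularQuasiGreedy (p : ℝ) (x : ℕ → ℕ → ℝ) (xs : ℕ → (ℕ → ℝ) → ℝ) (K : ℝ) : Prop :=
  ∀ f, MemLpSeq p f → ∀ A : Finset ℕ, GreedySet (fun n => xs n f) A →
    pModular p (∑ n ∈ A, xs n f • x n) ≤ K * pModular p f

lemma QuasiGreedy.exists_modularQuasiGreedy (hp : 0 < p) (h : QuasiGreedy p x xs) :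
    ∃ K, ModularQuasiGreedy p x xs K := by
  obtain ⟨C, hC1, hC⟩ := h
  refine ⟨C ^ p, fun f hf A hA => ?_⟩
  have hle : pNorm p (∑ n ∈ A, xs n f • x n) ≤ C * pNorm p f := by
    convert hC f hf A hA using 2
    ext j
    simp [Finset.sum_apply]
  rw [← pNorm_rpow hp, ← pNorm_rpow hp, ← Real.mul_rpow (by positivity) (pNorm_nonneg p f)]
  exact Real.rpow_le_rpow (pNorm_nonneg p _) hle hp.le

variable {K : ℝ}

lemma ModularQuasiGreedy.nonneg (hK : ModularQuasiGreedy p x xs K) (hp : 0 < p) : 0 ≤ K := by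
  simpa [pModular_zero hp, pModular_single hp] using
    hK _ (memLpSeq_single hp 0) ∅ fun n hn => absurd hn (notMem_empty n)

lemma greedySet_of_mem_iff {c : ℕ → ℝ} {A : Finset ℕ} {t : ℝ} (hA : ∀ n, n ∈ A ↔ t ≤ |c n|) :
    GreedySet c A := fun n hn k hk =>
  (not_le.1 fun h => hk ((hA k).2 h)).le.trans ((hA n).1 hn)

lemma mem_filter_not_lt_iff_of_mem_iff {c : ℕ → ℝ} {A : Finset ℕ} {s t : ℝ} (hts : t ≤ s)
    (hA : ∀ n, n ∈ A ↔ t ≤ |c n|) (n : ℕ) : n ∈ {n ∈ A | ¬|c n| < s} ↔ s ≤ |c n| := by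
  rw [mem_filter, hA, not_lt, and_iff_right_iff_imp]
  exact hts.trans

/-- Every subset of `A` is greedy when the nonzero coefficients all have modulus one. -/
lemma ModularQuasiGreedy.sum_subset_le (hK : ModularQuasiGreedy p x xs K)
    (h : IsLpBasis p x xs) (hp0 : 0 < p) (hp1 : p ≤ 1) {A B : Finset ℕ} (hBA : B ⊆ A)
    {σ : ℕ → ℝ} (hσ : ∀ n ∈ A, |σ n| = 1) :
    pModular p (∑ n ∈ B, σ n • x n) ≤ K * pModular p (∑ n ∈ A, σ n • x n) := by
  have hcoef := h.coef_sum_smul_basis hp0 hp1 A σ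
  have hgreedy : GreedySet (fun n => xs n (∑ m ∈ A, σ m • x m)) B := by
    intro n hn k _
    simp only [hcoef, if_pos (hBA hn), hσ n (hBA hn)]
    split_ifs with hk
    · exact (hσ k hk).le
    · simp
  convert hK _ (.sum_smul hp0 hp1 (fun n _ => h.mem n) σ) B hgreedy using 3 with n hn
  rw [hcoef, if_pos (hBA hn)]

lemma abs_sign_eq_one {a : ℝ} (ha : a ≠ 0) : |(SignType.sign a : ℝ)| = 1 := by
  rcases ha.lt_or_gt with h | h <;> simp [h]

lemma ModularQuasiGreedy.sum_sign_level_le (hK : ModularQuasiGreedy p x xs K)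
    (h : IsLpBasis p x xs) (hp0 : 0 < p) (hp1 : p ≤ 1) {δ : ℝ} (hδ0 : 0 < δ)
    (hδ : δ ^ p * (K / (2 ^ p - 1)) ≤ 1 / 2) (hf : MemLpSeq p f) {t : ℝ} (ht : 0 < t)
    {A : Finset ℕ} (hA : ∀ n, n ∈ A ↔ t ≤ |xs n f|) :
    pModular p (∑ n ∈ A with |xs n f| < (1 + δ) * t, (SignType.sign (xs n f) : ℝ) • x n) ≤
      4 * K * t ^ (-p) * pModular p f := by
  set D := {n ∈ A | |xs n f| < (1 + δ) * t}
  set A' := {n ∈ A | ¬|xs n f| < (1 + δ) * t}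
  have htδ : t ≤ (1 + δ) * t := le_mul_of_one_le_left ht.le (by linarith)
  have hA' := mem_filter_not_lt_iff_of_mem_iff htδ hA
  have hDA : ∀ n ∈ D, t ≤ |xs n f| := fun n hn => (hA n).1 (mem_of_mem_filter n hn)
  have hdiff : ∑ n ∈ D, (|xs n f| / t) • (SignType.sign (xs n f) : ℝ) • x n =
      t⁻¹ • (∑ n ∈ A, xs n f • x n - ∑ n ∈ A', xs n f • x n) := by
    rw [← sum_filter_add_sum_filter_not A fun n => |xs n f| < (1 + δ) * t, add_sub_cancel_right,
      smul_sum]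
    refine sum_congr rfl fun n _ => ?_
    rw [smul_smul, smul_smul, div_mul_eq_mul_div, mul_comm |_|, sign_mul_abs, div_eq_inv_mul]
  have hmem : ∀ B : Finset ℕ, MemLpSeq p (∑ n ∈ B, xs n f • x n) := fun B =>
    .sum_smul hp0 hp1 (fun n _ => h.mem n) _
  have huncond : ∀ B ⊆ D, pModular p (∑ n ∈ B, (SignType.sign (xs n f) : ℝ) • x n) ≤
      K * pModular p (∑ n ∈ D, (SignType.sign (xs n f) : ℝ) • x n) := fun B hB =>
    hK.sum_subset_le h hp0 hp1 hB fun n hn => abs_sign_eq_one (abs_pos.1 (ht.trans_le (hDA n hn)))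
  calc pModular p (∑ n ∈ D, (SignType.sign (xs n f) : ℝ) • x n)
      ≤ 2 * pModular p (∑ n ∈ D, (|xs n f| / t) • (SignType.sign (xs n f) : ℝ) • x n) :=
        pModular_sum_le_two_mul_of_weights hp0 hp1 (fun n _ => (h.mem n).smul _) hδ0 hδ huncond
          fun n hn => ⟨(one_le_div₀ ht).2 (hDA n hn),
            (div_le_iff₀ ht).2 (mem_filter.1 hn).2.le⟩
    _ = 2 * (t ^ (-p) * pModular p (∑ n ∈ A, xs n f • x n - ∑ n ∈ A', xs n f • x n)) := by
        rw [hdiff, pModular_smul, abs_of_pos (inv_pos.2 ht), Real.inv_rpow ht.le,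
          Real.rpow_neg ht.le]
    _ ≤ 2 * (t ^ (-p) * (K * pModular p f + K * pModular p f)) := by
        gcongr
        exact (pModular_sub_le hp0.le hp1 (hmem A) (hmem A')).trans
          (add_le_add (hK f hf A (greedySet_of_mem_iff hA)) (hK f hf A' (greedySet_of_mem_iff hA')))
    _ = 4 * K * t ^ (-p) * pModular p f := by ring

lemma exists_pos_rpow_mul_le_half (hp : 0 < p) {κ : ℝ} (hκ : 0 ≤ κ) :
    ∃ δ > 0, δ ^ p * κ ≤ 1 / 2 := by
  refine ⟨(2 * κ + 1)⁻¹ ^ p⁻¹, by positivity, ?_⟩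
  rw [Real.rpow_inv_rpow (by positivity) hp.ne', inv_mul_le_iff₀ (by positivity)]
  linarith

/-- Cut the coefficients into levels `[(1 + δ)^k t, (1 + δ)^(k + 1) t)`: `E` bounds the geometric
series formed by the bounds for the single levels. -/
lemma ModularQuasiGreedy.sum_sign_levelSet_le (hK : ModularQuasiGreedy p x xs K)
    (h : IsLpBasis p x xs) (hp0 : 0 < p) (hp1 : p ≤ 1) {δ : ℝ} (hδ0 : 0 < δ)
    (hδ : δ ^ p * (K / (2 ^ p - 1)) ≤ 1 / 2) {E : ℝ} (hE0 : 0 ≤ E)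
    (hE : 4 * K + E * (1 + δ) ^ (-p) = E) (hf : MemLpSeq p f) (k : ℕ) {t : ℝ} (ht : 0 < t)
    {A : Finset ℕ} (hA : ∀ n, n ∈ A ↔ t ≤ |xs n f|) (hk : ∀ n ∈ A, |xs n f| < (1 + δ) ^ k * t) :
    pModular p (∑ n ∈ A, (SignType.sign (xs n f) : ℝ) • x n) ≤ E * t ^ (-p) * pModular p f := by
  induction k generalizing t A with
  | zero =>
    have hempty : A = ∅ := eq_empty_of_forall_notMem fun n hn =>
      ((hA n).1 hn).not_gt (by simpa using hk n hn)
    rw [hempty, sum_empty, pModular_zero hp0]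
    have := pModular_nonneg p f
    positivity
  | succ k ih =>
    have htδ : t ≤ (1 + δ) * t := le_mul_of_one_le_left ht.le (by linarith)
    have hA' := mem_filter_not_lt_iff_of_mem_iff htδ hA
    have hlower := hK.sum_sign_level_le h hp0 hp1 hδ0 hδ hf ht hA
    have hupper := ih (t := (1 + δ) * t) (by positivity) hA' fun n hn => by
      simpa only [pow_succ, mul_assoc] using hk n (mem_of_mem_filter n hn)
    have hmem : ∀ B : Finset ℕ,
        MemLpSeq p (∑ n ∈ B, (SignType.sign (xs n f) : ℝ) • x n) := fun B =>
      .sum_smul hp0 hp1 (fun n _ => h.mem n) _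
    rw [← sum_filter_add_sum_filter_not A fun n => |xs n f| < (1 + δ) * t]
    refine (pModular_add_le hp0.le hp1 (hmem _) (hmem _)).trans
      ((add_le_add hlower hupper).trans_eq ?_)
    rw [Real.mul_rpow (by positivity) ht.le]
    linear_combination t ^ (-p) * pModular p f * hE

lemma ModularQuasiGreedy.exists_sum_sign_le (hK : ModularQuasiGreedy p x xs K)
    (h : IsLpBasis p x xs) (hp0 : 0 < p) (hp1 : p ≤ 1) :
    ∃ M ≥ 0, ∀ f, MemLpSeq p f → ∀ t > 0, ∀ A : Finset ℕ, (∀ n ∈ A, t ≤ |xs n f|) →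
      pModular p (∑ n ∈ A, (SignType.sign (xs n f) : ℝ) • x n) ≤ M * t ^ (-p) * pModular p f := by
  have hK0 := hK.nonneg hp0
  have h2p : 1 < (2 : ℝ) ^ p := Real.one_lt_rpow one_lt_two hp0
  obtain ⟨δ, hδ0, hδ⟩ := exists_pos_rpow_mul_le_half hp0 (div_nonneg hK0 (sub_pos.2 h2p).le)
  have hr : 0 < 1 - (1 + δ) ^ (-p) :=
    sub_pos.2 (Real.rpow_lt_one_of_one_lt_of_neg (by linarith) (by linarith))
  set E := 4 * K / (1 - (1 + δ) ^ (-p))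
  have hE0 : 0 ≤ E := by positivity
  have hE : 4 * K + E * (1 + δ) ^ (-p) = E := by
    linear_combination -div_mul_cancel₀ (4 * K) hr.ne'
  refine ⟨K * E, by positivity, fun f hf t ht A hA => ?_⟩
  set L := (h.finite_setOf_le_abs_coef hp0 hp1 hf ht).toFinset
  have hL : ∀ n, n ∈ L ↔ t ≤ |xs n f| := fun n => Set.Finite.mem_toFinset _
  obtain ⟨k, hk⟩ := pow_unbounded_of_one_lt ((∑ n ∈ L, |xs n f|) / t) (lt_add_of_pos_right 1 hδ0)
  have hlt : ∀ n ∈ L, |xs n f| < (1 + δ) ^ k * t := fun n hn =>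
    (single_le_sum (fun m _ => abs_nonneg (xs m f)) hn).trans_lt ((div_lt_iff₀ ht).1 hk)
  calc pModular p (∑ n ∈ A, (SignType.sign (xs n f) : ℝ) • x n)
      ≤ K * pModular p (∑ n ∈ L, (SignType.sign (xs n f) : ℝ) • x n) :=
        hK.sum_subset_le h hp0 hp1 (fun n hn => (hL n).2 (hA n hn)) fun n hn =>
          abs_sign_eq_one (abs_pos.1 (ht.trans_le ((hL n).1 hn)))
    _ ≤ K * (E * t ^ (-p) * pModular p f) := by
        gcongr
        exact hK.sum_sign_levelSet_le h hp0 hp1 hδ0 hδ hE0 hE hf k ht hL hlt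
    _ = K * E * t ^ (-p) * pModular p f := by ring

end Basis

section UnitVectors

variable {p : ℝ} {x : ℕ → ℕ → ℝ} {xs : ℕ → (ℕ → ℝ) → ℝ} {A : Finset ℕ} {σ : ℕ → ℝ} {K : ℝ}

/-- Expand `#A = ∑ n ∈ A, xs n (x n)` over the unit vectors and compare coordinatewise with the
average of the modulars over all subsets of `A`. -/
lemma IsLpBasis.card_le_mul (h : IsLpBasis p x xs) (hp0 : 0 < p) (hp1 : p ≤ 1) {Q W : ℝ}
    (hQ : ∀ B ⊆ A, pModular p (∑ n ∈ B, σ n • x n) ≤ Q) (hW0 : 0 ≤ W)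
    (hW : ∀ j, 2 ^ #A * ∑ n ∈ A, x n j * xs n (Pi.single j 1) ≤
      W * ∑ B ∈ A.powerset, |∑ n ∈ B, σ n * x n j| ^ p) :
    (#A : ℝ) ≤ W * Q := by
  have hcard : HasSum (fun j => 2 ^ #A * ∑ n ∈ A, x n j * xs n (Pi.single j 1))
      (2 ^ #A * #A) := by
    have := (hasSum_sum fun n (_ : n ∈ A) => h.hasSum_coef hp0 hp1 (h.mem n) n).mul_left
      ((2 : ℝ) ^ #A)
    simpa [h.biorth] using this
  have hmodular : HasSum (fun j => W * ∑ B ∈ A.powerset, |∑ n ∈ B, σ n * x n j| ^ p)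
      (W * ∑ B ∈ A.powerset, pModular p (∑ n ∈ B, σ n • x n)) := by
    refine (hasSum_sum fun B _ => ?_).mul_left W
    simpa only [Finset.sum_apply, Pi.smul_apply, smul_eq_mul] using
      (MemLpSeq.sum_smul hp0 hp1 (fun n (_ : n ∈ B) => h.mem n) σ).hasSum
  have haverage : ∑ B ∈ A.powerset, pModular p (∑ n ∈ B, σ n • x n) ≤ 2 ^ #A * Q := by
    simpa using sum_le_card_nsmul _ _ _ fun B hB => hQ B (mem_powerset.1 hB)
  refine le_of_mul_le_mul_left ?_ (by positivity : (0 : ℝ) < 2 ^ #A)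
  calc (2 : ℝ) ^ #A * #A ≤ W * ∑ B ∈ A.powerset, pModular p (∑ n ∈ B, σ n • x n) :=
        hasSum_le hW hcard hmodular
    _ ≤ W * (2 ^ #A * Q) := by gcongr
    _ = 2 ^ #A * (W * Q) := by ring

lemma sum_mul_eq_sum_mul_mul_mul_of_abs_eq_one (hσ : ∀ n ∈ A, |σ n| = 1) (u v : ℕ → ℝ) :
    ∑ n ∈ A, u n * v n = ∑ n ∈ A, σ n * u n * (σ n * v n) :=
  sum_congr rfl fun n hn => by
    rw [mul_mul_mul_comm, ← abs_mul_abs_self, hσ n hn, one_mul, one_mul]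

lemma IsLpBasis.card_le_sq (h : IsLpBasis p x xs) (hp0 : 0 < p) (hp1 : p ≤ 1) {b N : ℝ}
    (hb : ∀ j n, |xs n (Pi.single j 1)| ≤ b) (hσ : ∀ n ∈ A, |σ n| = 1) (hN : 0 ≤ N)
    (hQ : ∀ B ⊆ A, pModular p (∑ n ∈ B, σ n • x n) ≤ N ^ p) :
    (#A : ℝ) ≤ (2 * Real.exp (b ^ 2 / 2) * N) ^ 2 := by
  set s := √(#A : ℝ)
  have hcoord : ∀ j, ∀ B ∈ A.powerset,
      |∑ n ∈ B, σ n * x n j| ≤ N ^ (1 - p) * |∑ n ∈ B, σ n * x n j| ^ p := by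
    intro j B hB
    refine abs_le_rpow_mul_abs_rpow hp1 ((Real.rpow_le_rpow_iff (abs_nonneg _) hN hp0).1 ?_)
    have := (MemLpSeq.sum_smul hp0 hp1 (fun n (_ : n ∈ B) => h.mem n) σ).abs_rpow_le_pModular j
    simp only [Finset.sum_apply, Pi.smul_apply, smul_eq_mul] at this
    exact this.trans (hQ B (mem_powerset.1 hB))
  have hle : (#A : ℝ) ≤ 2 * Real.exp (b ^ 2 / 2) * s * N ^ (1 - p) * N ^ p := by
    refine h.card_le_mul hp0 hp1 hQ (by positivity) fun j => ?_
    rw [sum_mul_eq_sum_mul_mul_mul_of_abs_eq_one hσ, mul_assoc _ (N ^ _), mul_sum _ _ (N ^ _)]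
    refine (two_pow_card_mul_sum_mul_le_sqrt _ fun n hn => ?_).trans
      (mul_le_mul_of_nonneg_left (sum_le_sum (hcoord j)) (by positivity))
    rw [abs_mul, hσ n hn, one_mul]
    exact hb j n
  have hsq : s ^ 2 = #A := Real.sq_sqrt (Nat.cast_nonneg _)
  have hs : s ≤ 2 * Real.exp (b ^ 2 / 2) * N := by
    have hs0 : 0 ≤ s := Real.sqrt_nonneg _
    rcases hs0.eq_or_lt with h0 | hpos
    · rw [← h0]
      positivity
    refine le_of_mul_le_mul_right ?_ hpos
    rw [mul_assoc _ (N ^ _), rpow_one_sub_mul_rpow_self hN, ← hsq] at hle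
    linarith
  rw [← hsq]
  gcongr

lemma IsLpBasis.card_le_of_sum_abs_le (h : IsLpBasis p x xs) (hp0 : 0 < p) (hp1 : p ≤ 1)
    {N φ Q : ℝ} (hN0 : 0 ≤ N) (hN : ∀ n j, |x n j| ≤ N)
    (hφ : ∀ j, ∑ n ∈ A, |xs n (Pi.single j 1)| ≤ φ) (hσ : ∀ n ∈ A, |σ n| = 1)
    (hQ : ∀ B ⊆ A, pModular p (∑ n ∈ B, σ n • x n) ≤ Q) :
    (#A : ℝ) ≤ 2 * N ^ (1 - p) * φ * Q := by
  have hφ0 : 0 ≤ φ := (sum_nonneg fun n _ => abs_nonneg _).trans (hφ 0)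
  refine h.card_le_mul hp0 hp1 hQ (by positivity) fun j => ?_
  rw [sum_mul_eq_sum_mul_mul_mul_of_abs_eq_one hσ]
  have habs : ∀ n ∈ A, ∀ u : ℝ, |σ n * u| = |u| := fun n hn u => by
    rw [abs_mul, hσ n hn, one_mul]
  refine two_pow_card_mul_sum_mul_le_of_abs_le hp0.le hp1
    (fun n hn => (habs n hn _).trans_le (hN n j)) ?_ hN0
  rw [sum_congr rfl fun n hn => habs n hn _]
  exact hφ j

lemma ModularQuasiGreedy.exists_signs (hK : ModularQuasiGreedy p x xs K)
    (h : IsLpBasis p x xs) (hp0 : 0 < p) (hp1 : p ≤ 1) :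
    ∃ M ≥ (0 : ℝ), ∀ i, ∀ t > 0, ∀ A : Finset ℕ, (∀ n ∈ A, t ≤ |xs n (Pi.single i 1)|) →
      ∃ σ : ℕ → ℝ, (∀ n ∈ A, |σ n| = 1) ∧
        ∀ B ⊆ A, pModular p (∑ n ∈ B, σ n • x n) ≤ M * t ^ (-p) := by
  obtain ⟨M, hM0, hM⟩ := hK.exists_sum_sign_le h hp0 hp1
  refine ⟨M, hM0, fun i t ht A hA => ⟨fun n => SignType.sign (xs n (Pi.single i 1)),
    fun n hn => abs_sign_eq_one (abs_pos.1 (ht.trans_le (hA n hn))), fun B hBA => ?_⟩⟩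
  simpa [pModular_single hp0] using
    hM _ (memLpSeq_single hp0 i) t ht B fun n hn => hA n (hBA hn)

lemma ModularQuasiGreedy.uniformWeakLp_two (hK : ModularQuasiGreedy p x xs K)
    (h : IsLpBasis p x xs) (hp0 : 0 < p) (hp1 : p ≤ 1) :
    UniformWeakLp 2 fun i n => |xs n (Pi.single i 1)| := by
  obtain ⟨M, hM0, hM⟩ := hK.exists_signs h hp0 hp1
  obtain ⟨b, hb⟩ := h.exists_abs_coef_single_le hp0
  refine ⟨(2 * Real.exp (b ^ 2 / 2) * M ^ p⁻¹) ^ 2, by positivity, fun i t ht A hA => ?_⟩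
  obtain ⟨σ, hσ, hQ⟩ := hM i t ht A hA
  have hN : (M ^ p⁻¹ * t⁻¹) ^ p = M * t ^ (-p) := by
    rw [Real.mul_rpow (by positivity) (by positivity), Real.rpow_inv_rpow hM0 hp0.ne',
      Real.inv_rpow ht.le, Real.rpow_neg ht.le]
  refine (h.card_le_sq hp0 hp1 hb hσ (by positivity) (hN ▸ hQ)).trans_eq ?_
  rw [← mul_assoc, mul_pow _ t⁻¹, Real.rpow_neg ht.le, inv_pow, Real.rpow_two]

lemma ModularQuasiGreedy.uniformWeakLp_mul (hK : ModularQuasiGreedy p x xs K)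
    (h : IsLpBasis p x xs) (hp0 : 0 < p) (hp1 : p ≤ 1) {q : ℝ} (hq : 1 < q)
    (hweak : UniformWeakLp q fun i n => |xs n (Pi.single i 1)|) :
    UniformWeakLp (p * q) fun i n => |xs n (Pi.single i 1)| := by
  obtain ⟨M, hM0, hM⟩ := hK.exists_signs h hp0 hp1
  obtain ⟨N, hN⟩ := h.norm_ub
  obtain ⟨C, hC0, hC⟩ := hweak.exists_sum_le_rpow hq
  have hN0 : 0 ≤ N := (pNorm_nonneg p _).trans (hN 0)
  have hq0 : 0 < q := one_pos.trans hq
  set R := 2 * N ^ (1 - p) * C * M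
  refine ⟨R ^ q, by positivity, fun i t ht A hA => ?_⟩
  rcases A.eq_empty_or_nonempty with rfl | hne
  · simp only [card_empty, Nat.cast_zero]
    positivity
  have hcard : (0 : ℝ) < #A := by exact_mod_cast hne.card_pos
  obtain ⟨σ, hσ, hQ⟩ := hM i t ht A hA
  have hle : (#A : ℝ) ≤ R * t ^ (-p) * (#A : ℝ) ^ (1 - q⁻¹) :=
    (h.card_le_of_sum_abs_le hp0 hp1 hN0 (fun n j => ((h.mem n).abs_le_pNorm hp0 j).trans (hN n))
      (fun j => hC j A) hσ hQ).trans_eq (by ring)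
  have hroot : (#A : ℝ) ^ q⁻¹ ≤ R * t ^ (-p) := by
    refine le_of_mul_le_mul_right ?_ (Real.rpow_pos_of_pos hcard (1 - q⁻¹))
    rwa [← Real.rpow_add hcard, add_sub_cancel, Real.rpow_one]
  calc (#A : ℝ) = ((#A : ℝ) ^ q⁻¹) ^ q := (Real.rpow_inv_rpow hcard.le hq0.ne').symm
    _ ≤ (R * t ^ (-p)) ^ q := by gcongr
    _ = R ^ q * t ^ (-(p * q)) := by
        rw [Real.mul_rpow (by positivity) (by positivity), ← Real.rpow_mul ht.le, neg_mul]

lemma ModularQuasiGreedy.exists_sum_abs_coef_single_le (hK : ModularQuasiGreedy p x xs K)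
    (h : IsLpBasis p x xs) (hp0 : 0 < p) (hp1 : p < 1) :
    ∃ C, ∀ i (F : Finset ℕ), ∑ n ∈ F, |xs n (Pi.single i 1)| ≤ C := by
  obtain ⟨b, hb⟩ := h.exists_abs_coef_single_le hp0
  have hsqrt := (hK.uniformWeakLp_two h hp0 hp1.le).of_forall_mul hp0 hp1 hb
    fun _ => hK.uniformWeakLp_mul h hp0 hp1.le
  exact hsqrt.exists_sum_le (Real.sqrt_pos.2 hp0) (by simpa using Real.sqrt_lt_sqrt hp0.le hp1)

lemma IsLpBasis.sum_abs_coef_le (h : IsLpBasis p x xs) (hp0 : 0 < p) (hp1 : p ≤ 1)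
    {F : Finset ℕ} {C : ℝ} (hC : ∀ i, ∑ n ∈ F, |xs n (Pi.single i 1)| ≤ C) {f : ℕ → ℝ}
    (hf : MemLpSeq p f) : ∑ n ∈ F, |xs n f| ≤ C * pNorm p f := by
  have hC0 : 0 ≤ C := (sum_nonneg fun n _ => abs_nonneg _).trans (hC 0)
  have hcoef := fun n => h.hasSum_coef hp0 hp1 hf n
  have hle : ∀ i, ∑ n ∈ F, |f i * xs n (Pi.single i 1)| ≤ C * |f i| := fun i => by
    simp only [abs_mul, ← mul_sum]
    rw [mul_comm]
    exact mul_le_mul_of_nonneg_right (hC i) (abs_nonneg _)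
  calc ∑ n ∈ F, |xs n f| ≤ ∑ n ∈ F, ∑' i, |f i * xs n (Pi.single i 1)| :=
        sum_le_sum fun n _ => (hcoef n).norm_le_of_bounded (hcoef n).summable.abs.hasSum
          fun _ => le_rfl
    _ ≤ C * ∑' i, |f i| :=
        hasSum_le hle (hasSum_sum fun n _ => (hcoef n).summable.abs.hasSum)
          ((hf.summable_abs hp0 hp1).hasSum.mul_left C)
    _ ≤ C * pNorm p f := by
        gcongr
        exact hf.tsum_abs_le_pNorm hp0 hp1

end UnitVectors

/-- For a quasi-greedy basis of `ℓ_p`, `0<p<1`, the coefficient transform maps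
`ℓ_p` boundedly into `ℓ_1`. -/
theorem stmt5 (p : ℝ) (hp0 : 0 < p) (hp1 : p < 1)
    (x : ℕ → ℕ → ℝ) (xs : ℕ → (ℕ → ℝ) → ℝ)
    (hbasis : IsLpBasis p x xs) (hqg : QuasiGreedy p x xs) :
    ∃ C : ℝ, ∀ f, MemLpSeq p f → ∑' n, |xs n f| ≤ C * pNorm p f := by
  obtain ⟨K, hK⟩ := hqg.exists_modularQuasiGreedy hp0
  obtain ⟨C, hC⟩ := hK.exists_sum_abs_coef_single_le hbasis hp0 hp1
  exact ⟨C, fun f hf => Real.tsum_le_of_sum_le (fun _ => abs_nonneg _) fun F =>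
    hbasis.sum_abs_coef_le hp0 hp1.le (fun i => hC i F) hf⟩
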